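/- (Gluing across a hyperplane preserves weak k-th order data.) Let u ∈ C^∞ up to the boundary on the upper halfspace H⁺ and U ∈ C^∞ up to the boundary on the lower halfspace H⁻, both with A u ∈ L¹(H⁺) and A U ∈ L¹(H⁻), and suppose the traces of D^j u and D^j U on H = ∂H⁺ coincide for j = 0, 1, …, k−1. Define Eu = u on H⁺ and Eu = U on H⁻. Then for every test function φ ∈ C_c^∞(ℝⁿ, W), ∫_{ℝⁿ} Eu · A*φ dx = ∫_{H⁺} A u · φ dx + ∫_{H⁻} A U · φ dx, where A* = (−1)^k Σ_{|α|=k} A_α* ∂^α. In particular A(Eu) ∈ L¹(ℝⁿ, W) in the sense of distributions, equal to A u on H⁺ and A U on H⁻, with no singular part on H. -/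

import Mathlib

open MeasureTheory Finset RealInnerProductSpace

/-!
Let `G` be the function equal to `f` on `S` and to `F` off `S`, where `f` and `F` are compactly
supported `C¹` functions which agree on the frontier of `S`. A segment leaving `S` meets the
frontier, so `G` is Lipschitz and its directional derivatives integrate to zero. If the frontier is
null, these are almost everywhere the glued derivatives of `f` and `F`: this is integration by
parts without boundary term across the frontier. Applying it `k` times, each time to glued
derivatives whose traces still agree, moves all derivatives to the test function.
-/

lemma segment_inter_frontier_nonempty {E : Type*} [AddCommGroup E] [Module ℝ E]
    [TopologicalSpace E] [ContinuousAdd E] [ContinuousSMul ℝ E] {S : Set E} {x y : E}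
    (hx : x ∈ S) (hy : y ∉ S) : (segment ℝ x y ∩ frontier S).Nonempty := by
  have hconn : IsPreconnected (segment ℝ x y) := (convex_segment x y).isPreconnected
  by_contra hdisj
  have hcover : segment ℝ x y ⊆ interior S ∪ interior Sᶜ := fun z hz => by
    rw [← compl_frontier_eq_union_interior]
    exact fun hzS => hdisj ⟨z, hz, hzS⟩
  have hx' : x ∈ interior S := (hcover (left_mem_segment ℝ x y)).resolve_right
    fun h => interior_subset h hx
  have hy' : y ∈ interior Sᶜ := (hcover (right_mem_segment ℝ x y)).resolve_left
    fun h => hy (interior_subset h)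
  obtain ⟨z, -, hzS, hzSc⟩ := hconn _ _ isOpen_interior isOpen_interior hcover
    ⟨x, left_mem_segment ℝ x y, hx'⟩ ⟨y, right_mem_segment ℝ x y, hy'⟩
  exact interior_subset hzSc (interior_subset hzS)

lemma lipschitzWith_piecewise {E Y : Type*} [SeminormedAddCommGroup E] [NormedSpace ℝ E]
    [PseudoMetricSpace Y] {S : Set E} [∀ x, Decidable (x ∈ S)] {f g : E → Y} {C : NNReal}
    (hf : LipschitzWith C f) (hg : LipschitzWith C g) (hfg : Set.EqOn f g (frontier S)) :
    LipschitzWith C (S.piecewise f g) := by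
  have across : ∀ x ∈ S, ∀ y ∉ S, dist (f x) (g y) ≤ C * dist x y := by
    intro x hx y hy
    obtain ⟨z, hz, hzS⟩ := segment_inter_frontier_nonempty hx hy
    calc dist (f x) (g y) ≤ dist (f x) (f z) + dist (f z) (g y) := dist_triangle _ _ _
      _ = dist (f x) (f z) + dist (g z) (g y) := by rw [hfg hzS]
      _ ≤ C * dist x z + C * dist z y := add_le_add (hf.dist_le_mul x z) (hg.dist_le_mul z y)
      _ = C * dist x y := by rw [← mul_add, dist_add_dist_of_mem_segment hz]
  refine .of_dist_le_mul fun x y => ?_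
  by_cases hx : x ∈ S <;> by_cases hy : y ∈ S <;>
    simp only [Set.piecewise, hx, hy, if_true, if_false]
  · exact hf.dist_le_mul x y
  · exact across x hx y hy
  · rw [dist_comm, dist_comm x]
    exact across y hy x hx
  · exact hg.dist_le_mul x y

lemma lineDeriv_piecewise {𝕜 E F : Type*} [NontriviallyNormedField 𝕜] [NormedAddCommGroup E]
    [NormedSpace 𝕜 E] [NormedAddCommGroup F] [NormedSpace 𝕜 F] {S : Set E}
    [∀ x, Decidable (x ∈ S)] (f g : E → F) {x : E} (hx : x ∉ frontier S) (v : E) :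
    lineDeriv 𝕜 (S.piecewise f g) x v =
      S.piecewise (fun x => lineDeriv 𝕜 f x v) (fun x => lineDeriv 𝕜 g x v) x := by
  rw [← Set.mem_compl_iff, compl_frontier_eq_union_interior] at hx
  rcases hx with hxS | hxS
  · rw [Set.piecewise_eq_of_mem _ _ _ (interior_subset hxS)]
    exact ((S.piecewise_eqOn f g).eventuallyEq_of_mem
      (mem_interior_iff_mem_nhds.1 hxS)).lineDeriv_eq
  · rw [Set.piecewise_eq_of_notMem _ _ _ (interior_subset hxS)]
    exact ((S.piecewise_eqOn_compl f g).eventuallyEq_of_mem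
      (mem_interior_iff_mem_nhds.1 hxS)).lineDeriv_eq

section PiecewiseIntegral

variable {α F : Type*} [MeasurableSpace α] {μ : Measure α} [NormedAddCommGroup F]
  {S : Set α} [∀ x, Decidable (x ∈ S)] {f g : α → F}

lemma integrable_piecewise₀ (hS : NullMeasurableSet S μ) (hf : IntegrableOn f S μ)
    (hg : IntegrableOn g Sᶜ μ) : Integrable (S.piecewise f g) μ := by
  rw [← Set.indicator_add_compl_eq_piecewise]
  exact (hf.integrable_indicator₀ hS).add (hg.integrable_indicator₀ hS.compl)

lemma integral_piecewise₀ [NormedSpace ℝ F] (hS : NullMeasurableSet S μ)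
    (hf : IntegrableOn f S μ) (hg : IntegrableOn g Sᶜ μ) :
    ∫ x, S.piecewise f g x ∂μ = ∫ x in S, f x ∂μ + ∫ x in Sᶜ, g x ∂μ := by
  rw [← Set.indicator_add_compl_eq_piecewise,
    integral_add' (hf.integrable_indicator₀ hS) (hg.integrable_indicator₀ hS.compl),
    integral_indicator₀ hS, integral_indicator₀ hS.compl]

end PiecewiseIntegral

section IteratedFDeriv

variable {𝕜 X V : Type*} [NontriviallyNormedField 𝕜] [NormedAddCommGroup X] [NormedSpace 𝕜 X]
  [NormedAddCommGroup V] [NormedSpace 𝕜 V]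

lemma contDiff_fderiv_apply_const {n : ℕ} {f : X → V} (hf : ContDiff 𝕜 (n + 1 : ℕ) f) (v : X) :
    ContDiff 𝕜 n fun x => fderiv 𝕜 f x v :=
  (hf.fderiv_right (by norm_cast)).clm_apply contDiff_const

lemma contDiff_iteratedFDeriv_apply_const {n m k : ℕ} (hk : m + k ≤ n) {f : X → V}
    (hf : ContDiff 𝕜 n f) (v : Fin k → X) :
    ContDiff 𝕜 m fun x => iteratedFDeriv 𝕜 k f x v :=
  (ContinuousMultilinearMap.apply 𝕜 (fun _ : Fin k => X) V v).contDiff.comp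
    (hf.iteratedFDeriv_right (by exact_mod_cast hk))

lemma iteratedFDeriv_succ_apply_eq_fderiv {n : ℕ} {f : X → V} (hf : ContDiff 𝕜 (n + 1 : ℕ) f)
    (x : X) (v : Fin (n + 1) → X) :
    iteratedFDeriv 𝕜 (n + 1) f x v =
      fderiv 𝕜 (fun y => iteratedFDeriv 𝕜 n f y (Fin.tail v)) x (v 0) :=
  (hf.differentiable_iteratedFDeriv (by norm_cast; omega) x).iteratedFDeriv_succ_apply_left'

lemma continuous_iteratedFDeriv_apply_const {k : ℕ} {f : X → V} (hf : ContDiff 𝕜 k f)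
    (v : Fin k → X) : Continuous fun x => iteratedFDeriv 𝕜 k f x v :=
  (contDiff_iteratedFDeriv_apply_const (m := 0) (zero_add k).le hf v).continuous

lemma hasCompactSupport_iteratedFDeriv_apply_const {k : ℕ} {f : X → V} (hf : HasCompactSupport f)
    (v : Fin k → X) : HasCompactSupport fun x => iteratedFDeriv 𝕜 k f x v :=
  (hf.iteratedFDeriv (𝕜 := 𝕜) k).comp_left
    (g := fun M : ContinuousMultilinearMap 𝕜 (fun _ : Fin k => X) V => M v) rfl

/-- The homogeneous constant-coefficient differential operator of order `k` with coefficients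
`B j`, whose `j`-th monomial differentiates along the `k` directions `v j 0, …, v j (k - 1)`.
Direction tuples replace multi-indices, so several `j` may encode the same partial derivative. -/
noncomputable def homogeneousDiffOp {W ι : Type*} [NormedAddCommGroup W] [NormedSpace 𝕜 W]
    [Fintype ι] {k : ℕ} (B : ι → V →L[𝕜] W) (v : ι → Fin k → X) (u : X → V) (x : X) : W :=
  ∑ j, B j (iteratedFDeriv 𝕜 k u x (v j))

lemma continuous_homogeneousDiffOp {W ι : Type*} [NormedAddCommGroup W] [NormedSpace 𝕜 W]
    [Fintype ι] {k : ℕ} (B : ι → V →L[𝕜] W) (v : ι → Fin k → X) {u : X → V}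
    (hu : ContDiff 𝕜 k u) : Continuous (homogeneousDiffOp B v u) :=
  continuous_finsetSum _ fun j _ =>
    (B j).continuous.comp (continuous_iteratedFDeriv_apply_const hu (v j))

end IteratedFDeriv

section Symmetry

variable {𝕜 X V : Type*} [RCLike 𝕜] [NormedAddCommGroup X] [NormedSpace 𝕜 X]
  [NormedAddCommGroup V] [NormedSpace 𝕜 V]

lemma fderiv_fderiv_apply_comm {f : X → V} (hf : ContDiff 𝕜 2 f) (v w x : X) :
    fderiv 𝕜 (fun y => fderiv 𝕜 f y v) x w = fderiv 𝕜 (fun y => fderiv 𝕜 f y w) x v := by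
  have hdiff : DifferentiableAt 𝕜 (fderiv 𝕜 f) x :=
    (hf.fderiv_right (m := 1) (by norm_num)).differentiable (by norm_num) x
  have hsymm : IsSymmSndFDerivAt 𝕜 f x :=
    hf.contDiffAt.isSymmSndFDerivAt (by rw [minSmoothness_of_isRCLikeNormedField])
  simpa [fderiv_clm_apply hdiff (differentiableAt_const _)] using hsymm.eq w v

lemma iteratedFDeriv_succ_apply_eq_iteratedFDeriv_fderiv {n : ℕ} {f : X → V}
    (hf : ContDiff 𝕜 (n + 1 : ℕ) f) (x : X) (v : Fin (n + 1) → X) :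
    iteratedFDeriv 𝕜 (n + 1) f x v =
      iteratedFDeriv 𝕜 n (fun y => fderiv 𝕜 f y (v 0)) x (Fin.tail v) := by
  induction n generalizing f x with
  | zero => simp
  | succ n ih =>
    have hf' := contDiff_fderiv_apply_const hf
    have hf₂ : ContDiff 𝕜 2 f := hf.of_le (by norm_cast; omega)
    calc iteratedFDeriv 𝕜 (n + 2) f x v
        = fderiv 𝕜 (fun y => iteratedFDeriv 𝕜 (n + 1) f y (Fin.tail v)) x (v 0) :=
          iteratedFDeriv_succ_apply_eq_fderiv hf x v
      _ = fderiv 𝕜 (fun y => iteratedFDeriv 𝕜 n (fun z => fderiv 𝕜 f z (v 1)) y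
            (Fin.tail (Fin.tail v))) x (v 0) := by
          simp only [fun y => ih (hf.of_le (by norm_cast; omega)) y (Fin.tail v)]
          rfl
      _ = iteratedFDeriv 𝕜 (n + 1) (fun z => fderiv 𝕜 f z (v 1)) x
            (Fin.cons (v 0) (Fin.tail (Fin.tail v))) := by
          rw [iteratedFDeriv_succ_apply_eq_fderiv (hf' _), Fin.tail_cons, Fin.cons_zero]
      _ = iteratedFDeriv 𝕜 n (fun y => fderiv 𝕜 (fun z => fderiv 𝕜 f z (v 1)) y (v 0)) x
            (Fin.tail (Fin.tail v)) := by
          rw [ih (hf' _), Fin.tail_cons, Fin.cons_zero]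
      _ = iteratedFDeriv 𝕜 n (fun y => fderiv 𝕜 (fun z => fderiv 𝕜 f z (v 0)) y (v 1)) x
            (Fin.tail (Fin.tail v)) := by
          simp only [fderiv_fderiv_apply_comm hf₂ (v 1) (v 0)]
      _ = iteratedFDeriv 𝕜 (n + 1) (fun y => fderiv 𝕜 f y (v 0)) x (Fin.tail v) :=
          (ih (hf' _) x (Fin.tail v)).symm

end Symmetry

section InnerIntegral

variable {X V : Type*} [TopologicalSpace X] [NormedAddCommGroup V] [InnerProductSpace ℝ V]

lemma hasCompactSupport_inner_right (f : X → V) {g : X → V} (hg : HasCompactSupport g) :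
    HasCompactSupport fun x => ⟪f x, g x⟫ :=
  hg.mono' fun x hx => subset_tsupport g fun h => hx (by simp only [h, inner_zero_right])

variable [MeasurableSpace X] [OpensMeasurableSpace X] {μ : Measure X}
  [IsFiniteMeasureOnCompacts μ] {S : Set X} [∀ x, Decidable (x ∈ S)]

lemma integrable_inner_of_hasCompactSupport {f g : X → V}
    (hf : Continuous f) (hg : Continuous g) (hgc : HasCompactSupport g) :
    Integrable (fun x => ⟪f x, g x⟫) μ :=
  (hf.inner hg).integrable_of_hasCompactSupport (hasCompactSupport_inner_right f hgc)

lemma integrable_inner_piecewise (hS : NullMeasurableSet S μ)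
    {f F g : X → V} (hf : Continuous f) (hF : Continuous F) (hg : Continuous g)
    (hgc : HasCompactSupport g) : Integrable (fun x => ⟪S.piecewise f F x, g x⟫) μ := by
  simp only [Set.apply_piecewise S f F fun x y => ⟪y, g x⟫]
  exact integrable_piecewise₀ hS
    (integrable_inner_of_hasCompactSupport hf hg hgc).integrableOn
    (integrable_inner_of_hasCompactSupport hF hg hgc).integrableOn

lemma integral_inner_piecewise (hS : NullMeasurableSet S μ)
    {f F g : X → V} (hf : Continuous f) (hF : Continuous F) (hg : Continuous g)
    (hgc : HasCompactSupport g) :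
    ∫ x, ⟪S.piecewise f F x, g x⟫ ∂μ = ∫ x in S, ⟪f x, g x⟫ ∂μ + ∫ x in Sᶜ, ⟪F x, g x⟫ ∂μ := by
  simp only [Set.apply_piecewise S f F fun x y => ⟪y, g x⟫]
  exact integral_piecewise₀ hS
    (integrable_inner_of_hasCompactSupport hf hg hgc).integrableOn
    (integrable_inner_of_hasCompactSupport hF hg hgc).integrableOn

end InnerIntegral

section IntegrationByParts

variable {X V : Type*} [NormedAddCommGroup X] [NormedSpace ℝ X]
  [FiniteDimensional ℝ X] [MeasurableSpace X] [BorelSpace X] {μ : Measure X} [μ.IsAddHaarMeasure]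
  [NormedAddCommGroup V] [InnerProductSpace ℝ V] {S : Set X} [∀ x, Decidable (x ∈ S)]

lemma integral_lineDeriv_eq_zero_of_hasCompactSupport {C : NNReal} {f : X → ℝ}
    (hf : LipschitzWith C f) (hfc : HasCompactSupport f) (v : X) :
    ∫ x, lineDeriv ℝ f x v ∂μ = 0 := by
  simpa [lineDeriv] using (LipschitzWith.integral_lineDeriv_mul_eq (μ := μ)
    (LipschitzWith.const (1 : ℝ)) hf hfc (-v)).symm

lemma integral_piecewise_fderiv_eq_zero (hS : μ (frontier S) = 0) {f F : X → ℝ}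
    (hf : ContDiff ℝ 1 f) (hF : ContDiff ℝ 1 F) (hfc : HasCompactSupport f)
    (hFc : HasCompactSupport F) (hfF : Set.EqOn f F (frontier S)) (v : X) :
    ∫ x, S.piecewise (fun x => fderiv ℝ f x v) (fun x => fderiv ℝ F x v) x ∂μ = 0 := by
  obtain ⟨C, hC⟩ := hf.lipschitzWith_of_hasCompactSupport hfc one_ne_zero
  obtain ⟨D, hD⟩ := hF.lipschitzWith_of_hasCompactSupport hFc one_ne_zero
  have hlip : LipschitzWith (max C D) (S.piecewise f F) :=
    lipschitzWith_piecewise (hC.weaken (le_max_left C D)) (hD.weaken (le_max_right C D)) hfF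
  have hsupp : HasCompactSupport (S.piecewise f F) := by
    rw [← Set.indicator_add_compl_eq_piecewise]
    exact (hfc.mono (Set.support_indicator.trans_subset Set.inter_subset_right)).add
      (hFc.mono (Set.support_indicator.trans_subset Set.inter_subset_right))
  rw [← integral_lineDeriv_eq_zero_of_hasCompactSupport (μ := μ) hlip hsupp v]
  refine integral_congr_ae ?_
  filter_upwards [compl_mem_ae_iff.2 hS] with x hx
  simp only [lineDeriv_piecewise f F hx,
    ((hf.differentiable one_ne_zero) _).lineDeriv_eq_fderiv,
    ((hF.differentiable one_ne_zero) _).lineDeriv_eq_fderiv]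

lemma integral_inner_piecewise_fderiv (hS : μ (frontier S) = 0) {f F g : X → V}
    (hf : ContDiff ℝ 1 f) (hF : ContDiff ℝ 1 F) (hg : ContDiff ℝ 1 g) (hgc : HasCompactSupport g)
    (hfF : Set.EqOn f F (frontier S)) (v : X) :
    ∫ x, ⟪S.piecewise (fun x => fderiv ℝ f x v) (fun x => fderiv ℝ F x v) x, g x⟫ ∂μ =
      -∫ x, ⟪S.piecewise f F x, fderiv ℝ g x v⟫ ∂μ := by
  have hSm : NullMeasurableSet S μ := nullMeasurableSet_of_null_frontier hS
  have hcont : ∀ {p : X → V}, ContDiff ℝ 1 p → Continuous fun x => fderiv ℝ p x v :=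
    fun hp => (hp.continuous_fderiv one_ne_zero).clm_apply continuous_const
  have leibniz : ∀ {p : X → V}, ContDiff ℝ 1 p → ∀ x, fderiv ℝ (fun x => ⟪p x, g x⟫) x v =
      ⟪p x, fderiv ℝ g x v⟫ + ⟪fderiv ℝ p x v, g x⟫ := fun hp x =>
    fderiv_inner_apply ℝ (hp.differentiable one_ne_zero x) (hg.differentiable one_ne_zero x) v
  have hzero := integral_piecewise_fderiv_eq_zero hS (hf.inner ℝ hg) (hF.inner ℝ hg)
    (hasCompactSupport_inner_right f hgc) (hasCompactSupport_inner_right F hgc)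
    (fun x hx => by simp only [hfF hx]) v
  rw [eq_neg_iff_add_eq_zero, add_comm, ← hzero,
    ← integral_add (integrable_inner_piecewise hSm hf.continuous hF.continuous (hcont hg)
      (hgc.fderiv_apply ℝ v))
    (integrable_inner_piecewise hSm (hcont hf) (hcont hF) hg.continuous hgc)]
  congr with x
  by_cases hx : x ∈ S <;> simp [hx, leibniz hf, leibniz hF]

lemma integral_inner_piecewise_iteratedFDeriv (hS : μ (frontier S) = 0) {k : ℕ} {f F g : X → V}
    (hf : ContDiff ℝ k f) (hF : ContDiff ℝ k F) (hg : ContDiff ℝ k g) (hgc : HasCompactSupport g)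
    (hfF : ∀ j < k, Set.EqOn (iteratedFDeriv ℝ j f) (iteratedFDeriv ℝ j F) (frontier S))
    (v : Fin k → X) :
    ∫ x, ⟪S.piecewise (fun x => iteratedFDeriv ℝ k f x v) (fun x => iteratedFDeriv ℝ k F x v) x,
        g x⟫ ∂μ =
      (-1) ^ k * ∫ x, ⟪S.piecewise f F x, iteratedFDeriv ℝ k g x v⟫ ∂μ := by
  induction k generalizing g with
  | zero => simp
  | succ k ih =>
    have hlt : (k : WithTop ℕ∞) ≤ (k + 1 : ℕ) := by norm_cast; omega
    simp only [iteratedFDeriv_succ_apply_eq_fderiv hf, iteratedFDeriv_succ_apply_eq_fderiv hF,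
      iteratedFDeriv_succ_apply_eq_iteratedFDeriv_fderiv hg]
    rw [integral_inner_piecewise_fderiv hS
        (mod_cast contDiff_iteratedFDeriv_apply_const (m := 1) (by omega) hf _)
        (mod_cast contDiff_iteratedFDeriv_apply_const (m := 1) (by omega) hF _)
        (hg.of_le (by norm_cast; omega)) hgc (fun x hx => by simp only [hfF k k.lt_succ_self hx]),
      ih (hf.of_le hlt) (hF.of_le hlt) (contDiff_fderiv_apply_const hg _)
        (hgc.fderiv_apply ℝ _) (fun j hj => hfF j (hj.trans k.lt_succ_self))]
    ring

end IntegrationByParts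

section HomogeneousDiffOp

variable {X V W ι : Type*} [NormedAddCommGroup X] [NormedSpace ℝ X]
  [NormedAddCommGroup V] [InnerProductSpace ℝ V] [CompleteSpace V]
  [NormedAddCommGroup W] [InnerProductSpace ℝ W] [CompleteSpace W] [Fintype ι] {k : ℕ}

lemma inner_homogeneousDiffOp_adjoint (B : ι → V →L[ℝ] W) (v : ι → Fin k → X) {φ : X → W}
    (hφ : ContDiff ℝ k φ) (y : V) (x : X) :
    ⟪y, homogeneousDiffOp (fun j => (B j).adjoint) v φ x⟫ =
      ∑ j, ⟪y, iteratedFDeriv ℝ k (fun z => (B j).adjoint (φ z)) x (v j)⟫ := by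
  rw [homogeneousDiffOp, inner_sum]
  refine sum_congr rfl fun j _ => ?_
  congr 1
  exact (DFunLike.congr_fun ((B j).adjoint.iteratedFDeriv_comp_left hφ.contDiffAt le_rfl)
    (v j)).symm

variable [MeasurableSpace X] [BorelSpace X] [FiniteDimensional ℝ X] {μ : Measure X}
  [μ.IsAddHaarMeasure] {S : Set X} [∀ x, Decidable (x ∈ S)]

lemma integral_inner_piecewise_homogeneousDiffOp (hS : μ (frontier S) = 0)
    (B : ι → V →L[ℝ] W) (v : ι → Fin k → X) {u U : X → V}
    (hu : ContDiff ℝ k u) (hU : ContDiff ℝ k U)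
    (huU : ∀ j < k, Set.EqOn (iteratedFDeriv ℝ j u) (iteratedFDeriv ℝ j U) (frontier S))
    {φ : X → W} (hφ : ContDiff ℝ k φ) (hφc : HasCompactSupport φ) :
    ∫ x, ⟪S.piecewise (homogeneousDiffOp B v u) (homogeneousDiffOp B v U) x, φ x⟫ ∂μ =
      ∫ x, ⟪S.piecewise u U x,
        (-1 : ℝ) ^ k • homogeneousDiffOp (fun j => (B j).adjoint) v φ x⟫ ∂μ := by
  have hSm : NullMeasurableSet S μ := nullMeasurableSet_of_null_frontier hS
  let ψ : ι → X → V := fun j x => (B j).adjoint (φ x)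
  have hψ : ∀ j, ContDiff ℝ k (ψ j) := fun j => (B j).adjoint.contDiff.comp hφ
  have hψc : ∀ j, HasCompactSupport (ψ j) := fun j => hφc.comp_left (map_zero _)
  calc ∫ x, ⟪S.piecewise (homogeneousDiffOp B v u) (homogeneousDiffOp B v U) x, φ x⟫ ∂μ
      = ∫ x, ∑ j, ⟪S.piecewise (fun x => iteratedFDeriv ℝ k u x (v j))
          (fun x => iteratedFDeriv ℝ k U x (v j)) x, ψ j x⟫ ∂μ := by
        congr with x
        by_cases hx : x ∈ S <;>
          simp [hx, homogeneousDiffOp, sum_inner, ψ, ContinuousLinearMap.adjoint_inner_right]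
    _ = ∑ j, ∫ x, ⟪S.piecewise (fun x => iteratedFDeriv ℝ k u x (v j))
          (fun x => iteratedFDeriv ℝ k U x (v j)) x, ψ j x⟫ ∂μ :=
        integral_finsetSum _ fun j _ =>
          integrable_inner_piecewise hSm (continuous_iteratedFDeriv_apply_const hu (v j))
            (continuous_iteratedFDeriv_apply_const hU (v j)) (hψ j).continuous (hψc j)
    _ = ∑ j, (-1) ^ k * ∫ x, ⟪S.piecewise u U x, iteratedFDeriv ℝ k (ψ j) x (v j)⟫ ∂μ :=
        sum_congr rfl fun j _ =>
          integral_inner_piecewise_iteratedFDeriv hS hu hU (hψ j) (hψc j) huU (v j)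
    _ = (-1) ^ k * ∫ x, ∑ j, ⟪S.piecewise u U x, iteratedFDeriv ℝ k (ψ j) x (v j)⟫ ∂μ := by
        rw [← mul_sum, integral_finsetSum _ fun j _ =>
          integrable_inner_piecewise hSm hu.continuous hU.continuous
            (continuous_iteratedFDeriv_apply_const (hψ j) (v j))
            (hasCompactSupport_iteratedFDeriv_apply_const (hψc j) (v j))]
    _ = ∫ x, ⟪S.piecewise u U x,
          (-1 : ℝ) ^ k • homogeneousDiffOp (fun j => (B j).adjoint) v φ x⟫ ∂μ := by
        simp only [inner_smul_right, integral_const_mul, inner_homogeneousDiffOp_adjoint B v hφ, ψ]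

theorem stmt_18_general (hS : μ (frontier S) = 0) (B : ι → V →L[ℝ] W) (v : ι → Fin k → X)
    {u U : X → V} (hu : ContDiff ℝ k u) (hU : ContDiff ℝ k U)
    (huU : ∀ j < k, Set.EqOn (iteratedFDeriv ℝ j u) (iteratedFDeriv ℝ j U) (frontier S))
    {φ : X → W} (hφ : ContDiff ℝ k φ) (hφc : HasCompactSupport φ) :
    ∫ x, ⟪S.piecewise u U x,
        (-1 : ℝ) ^ k • homogeneousDiffOp (fun j => (B j).adjoint) v φ x⟫ ∂μ =
      ∫ x in S, ⟪homogeneousDiffOp B v u x, φ x⟫ ∂μ +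
        ∫ x in Sᶜ, ⟪homogeneousDiffOp B v U x, φ x⟫ ∂μ := by
  rw [← integral_inner_piecewise_homogeneousDiffOp hS B v hu hU huU hφ hφc,
    integral_inner_piecewise (nullMeasurableSet_of_null_frontier hS)
      (continuous_homogeneousDiffOp B v hu) (continuous_homogeneousDiffOp B v hU)
      hφ.continuous hφc]

end HomogeneousDiffOp

section HalfSpace

variable {ι : Type*} (i : ι)

lemma frontier_setOf_nonneg_apply_subset :
    frontier {x : ι → ℝ | 0 ≤ x i} ⊆ {x | x i = 0} := fun _ hx =>
  (frontier_le_subset_eq continuous_const (continuous_apply i) hx).symm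

lemma volume_setOf_apply_eq_zero [Fintype ι] : volume {x : ι → ℝ | x i = 0} = 0 :=
  Measure.pi_hyperplane _ i 0

lemma setOf_pos_apply_ae_eq_setOf_nonneg_apply [Fintype ι] :
    {x : ι → ℝ | 0 < x i} =ᵐ[volume] {x | 0 ≤ x i} := by
  refine Filter.eventuallyEq_set.2 ?_
  filter_upwards [compl_mem_ae_iff.2 (volume_setOf_apply_eq_zero i)] with x hx
  exact ⟨le_of_lt, fun h => lt_of_le_of_ne h (Ne.symm hx)⟩

end HalfSpace

/-- gluing across a hyperplane preserves weak k-th order data: let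
`A v = Σ_j B_j ∂^{α_j} v` be a homogeneous k-th order constant-coefficient operator
(coefficients `B j : V →ₗ[ℝ] W`, direction tuples `d j : Fin k → Fin n`).  If `u`, `U`
are smooth up to the boundary on the upper/lower halfspaces, with `A u ∈ L¹(H⁺)`,
`A U ∈ L¹(H⁻)`, and the traces of `D^j u` and `D^j U` on `{xₙ = 0}` coincide for
`j = 0, …, k−1`, then the glued function `Eu` satisfies, for every test function `φ`,
`∫ Eu · A*φ = ∫_{H⁺} A u · φ + ∫_{H⁻} A U · φ`, where
`A*φ = (−1)^k Σ_j B_j^* ∂^{α_j} φ`. -/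
theorem stmt_18 (m k : ℕ) (hk : 1 ≤ k)
    (V W : Type*) [NormedAddCommGroup V] [InnerProductSpace ℝ V] [FiniteDimensional ℝ V]
    [NormedAddCommGroup W] [InnerProductSpace ℝ W] [FiniteDimensional ℝ W]
    (ι : Type*) [Fintype ι] (B : ι → V →ₗ[ℝ] W) (d : ι → Fin k → Fin (m + 1))
    (u U : (Fin (m + 1) → ℝ) → V) (hu : ContDiff ℝ (⊤ : ℕ∞) u) (hU : ContDiff ℝ (⊤ : ℕ∞) U)
    (htr : ∀ j < k, ∀ x : Fin (m + 1) → ℝ, x (Fin.last m) = 0 →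
      iteratedFDeriv ℝ j u x = iteratedFDeriv ℝ j U x)
    (Au AU : (Fin (m + 1) → ℝ) → W)
    (hAu : Au = fun x => ∑ j : ι,
      B j (iteratedFDeriv ℝ k u x fun l => Pi.single (d j l) (1 : ℝ)))
    (hAU : AU = fun x => ∑ j : ι,
      B j (iteratedFDeriv ℝ k U x fun l => Pi.single (d j l) (1 : ℝ)))
    (hint1 : IntegrableOn Au {x : Fin (m + 1) → ℝ | 0 < x (Fin.last m)})
    (hint2 : IntegrableOn AU {x : Fin (m + 1) → ℝ | x (Fin.last m) < 0})
    (E : (Fin (m + 1) → ℝ) → V)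
    (hE : E = fun x => if 0 ≤ x (Fin.last m) then u x else U x)
    (φ : (Fin (m + 1) → ℝ) → W) (hφ : ContDiff ℝ (⊤ : ℕ∞) φ) (hφc : HasCompactSupport φ) :
    ∫ x : Fin (m + 1) → ℝ,
        ⟪E x, ((-1 : ℝ) ^ k) • ∑ j : ι, (LinearMap.adjoint (B j))
          (iteratedFDeriv ℝ k φ x fun l => Pi.single (d j l) (1 : ℝ))⟫
      = (∫ x in {x : Fin (m + 1) → ℝ | 0 < x (Fin.last m)}, ⟪Au x, φ x⟫)
        + ∫ x in {x : Fin (m + 1) → ℝ | x (Fin.last m) < 0}, ⟪AU x, φ x⟫ := by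
  subst hAu hAU hE
  have : CompleteSpace V := FiniteDimensional.complete ℝ V
  have : CompleteSpace W := FiniteDimensional.complete ℝ W
  have hfrontier := frontier_setOf_nonneg_apply_subset (Fin.last m)
  have hcompl : {x : Fin (m + 1) → ℝ | x (Fin.last m) < 0} = {x | 0 ≤ x (Fin.last m)}ᶜ := by
    ext x; simp
  rw [setIntegral_congr_set (setOf_pos_apply_ae_eq_setOf_nonneg_apply (Fin.last m)), hcompl]
  exact stmt_18_general
    (measure_mono_null hfrontier (volume_setOf_apply_eq_zero (Fin.last m)))
    (fun j => (B j).toContinuousLinearMap) (fun j l => Pi.single (d j l) 1)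
    (hu.of_le (mod_cast le_top)) (hU.of_le (mod_cast le_top))
    (fun j hj x hx => htr j hj x (hfrontier hx)) (hφ.of_le (mod_cast le_top)) hφc
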